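/- Let P, I, C be n×n matrices with entries in ℝ ∪ {-∞} such that P_{jj} ≠ -∞ for every index j, and let λ ∈ ℝ. Over the three-letter alphabet Σ = {p, i, c} with μ(p) = P, μ(i) = I, μ(c) = C, let 𝒫 = {c}^* · {p} · {c}^*, ℐ = {c}^* · {i} · {c}^*, and S = S(𝒫, ℐ, ⌊n/2⌋). Then G(λP ⊕ λ^{-1}I ⊕ C) ∈ Γ if and only if G(C) ∈ Γ and mcm(μ(ℐ · S^*)) ≤ λ ≤ -mcm(μ(𝒫 · S^*)), where the inequalities are between extended reals and the negation satisfies -(+∞) = -∞ and -(-∞) = +∞. -/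

import Mathlib

open scoped Classical

namespace NCP

/-- Square max-plus matrices over the extended reals. -/
abbrev MPMat (n : ℕ) := Fin n → Fin n → EReal

/-- Max-plus matrix product: `(A ⊗ B) i j = ⨆ k, A i k + B k j`. -/
noncomputable def mpMul {n : ℕ} (A B : MPMat n) : MPMat n :=
  fun i j => ⨆ k : Fin n, A i k + B k j

/-- Max-plus identity matrix `E_⊗`. -/
noncomputable def mpId {n : ℕ} : MPMat n :=
  fun i j => if i = j then 0 else ⊥

/-- Max-plus matrix powers. -/
noncomputable def mpPow {n : ℕ} (A : MPMat n) : ℕ → MPMat n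
  | 0 => mpId
  | k + 1 => mpMul A (mpPow A k)

/-- Entrywise Kleene star `(A^*) i j = ⨆ k, (A^k) i j`. -/
noncomputable def mpStar {n : ℕ} (A : MPMat n) : MPMat n :=
  fun i j => ⨆ k : ℕ, mpPow A k i j

/-- Entrywise max of two matrices, `A ⊕ B`. -/
noncomputable def mpAdd {n : ℕ} (A B : MPMat n) : MPMat n :=
  fun i j => max (A i j) (B i j)

/-- `G(A) ∈ Γ`: all diagonal entries of all positive powers are ≤ 0. -/
def InGamma {n : ℕ} (A : MPMat n) : Prop :=
  ∀ i : Fin n, ∀ k : ℕ, 1 ≤ k → mpPow A k i i ≤ 0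

/-- `λA`: the matrix with entries `λ + A i j`. -/
noncomputable def sm {n : ℕ} (lam : ℝ) (A : MPMat n) : MPMat n :=
  fun i j => (lam : EReal) + A i j

/-- Division of an extended real by a natural number (±∞ map to ±∞). -/
noncomputable def edivNat (x : EReal) (k : ℕ) : EReal :=
  if x = ⊤ then ⊤ else if x = ⊥ then ⊥ else ((x.toReal / k : ℝ) : EReal)

/-- The maximum circuit mean of a max-plus matrix. -/
noncomputable def mcm {n : ℕ} (M : MPMat n) : EReal :=
  ⨆ k ∈ Finset.Icc 1 n, ⨆ i : Fin n, edivNat (mpPow M k i i) k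

/-- Morphism from words to max-plus matrices determined by `f` on letters. -/
noncomputable def wordMat {α : Type*} {n : ℕ} (f : α → MPMat n) : List α → MPMat n
  | [] => mpId
  | z :: s => mpMul (f z) (wordMat f s)

/-- Entrywise extension of `wordMat` to languages: `μ(L) i j = ⨆ s ∈ L, μ(s) i j`. -/
noncomputable def langMat {α : Type*} {n : ℕ} (f : α → MPMat n) (L : Language α) : MPMat n :=
  fun i j => ⨆ s ∈ L, wordMat f s i j

/-- The recursive sequence of languages `S(L₁, L₂, k)`. -/
def SL {α : Type*} (L1 L2 : Language α) : ℕ → Language α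
  | 0 => 1
  | k + 1 => L1 * SL L1 L2 k * SL L1 L2 k * L2 + L2 * SL L1 L2 k * SL L1 L2 k * L1 + 1


/-- The matrix `λP ⊕ λ⁻¹I ⊕ C`. -/
noncomputable def picMat {n : ℕ} (P I C : MPMat n) (lam : ℝ) : MPMat n :=
  fun i j => max (max ((lam : EReal) + P i j) (((-lam : ℝ) : EReal) + I i j)) (C i j)

/-- The solution set `Λ(P, I, C)` of the PIC non-positive circuit problem. -/
noncomputable def Lambda {n : ℕ} (P I C : MPMat n) : Set ℝ :=
  {lam : ℝ | InGamma (picMat P I C lam)}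

/-- The morphism on the three-letter alphabet `{p, i, c}` (encoded as `Fin 3` with
`p = 0`, `i = 1`, `c = 2`) sending `p` to `P`, `i` to `I` and `c` to `C`. -/
noncomputable def mu3 {n : ℕ} (P I C : MPMat n) : Fin 3 → MPMat n := ![P, I, C]

/-- The language `𝒫 = {c}^* · {p} · {c}^*` over `{p, i, c}`. -/
def langP : Language (Fin 3) :=
  KStar.kstar ({[(2 : Fin 3)]} : Language (Fin 3)) * ({[(0 : Fin 3)]} : Language (Fin 3)) *
    KStar.kstar ({[(2 : Fin 3)]} : Language (Fin 3))

/-- The language `ℐ = {c}^* · {i} · {c}^*` over `{p, i, c}`. -/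
def langI : Language (Fin 3) :=
  KStar.kstar ({[(2 : Fin 3)]} : Language (Fin 3)) * ({[(1 : Fin 3)]} : Language (Fin 3)) *
    KStar.kstar ({[(2 : Fin 3)]} : Language (Fin 3))

/-!
Give the letters `p`, `i`, `c` the weights `λ`, `-λ`, `0`. Then `G(λP ⊕ λ⁻¹I ⊕ C) ∈ Γ` says that
`μ(w) i i ≤ -height w` for every word `w`, which yields the bounds on `μ(ℐ·S^*)` and `μ(𝒫·S^*)`
since these languages are homogeneous. Conversely, words of length at most `n` suffice. Such a word
lies in `{c}^*` or in a product of factors `𝒫` and `ℐ`, read as a path with steps `±1`. A balanced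
path lies in `S·S`; any other one is cut at its first visits to the successive heights, and rotating
the cyclic word puts it in a power of `𝒫·S^*` or `ℐ·S^*`. Balanced words are controlled by
`S^*·S^* = S^*`: a finite entry `z = μ(𝒫·S^*) i i` satisfies `z + μ(S^*) i i ≤ z`.
-/

open scoped Computability

section MaxPlus

variable {n : ℕ}

theorem ereal_iSup_add {ι : Sort*} (f : ι → EReal) (x : EReal) : (⨆ k, f k) + x = ⨆ k, f k + x := by
  apply le_antisymm
  · refine EReal.add_le_of_forall_lt fun a ha b hb => ?_
    obtain ⟨k, hk⟩ := lt_iSup_iff.1 ha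
    exact (add_le_add hk.le hb.le).trans (le_iSup (fun k => f k + x) k)
  · exact iSup_le fun k => add_le_add (le_iSup f k) le_rfl

theorem ereal_add_iSup {ι : Sort*} (f : ι → EReal) (x : EReal) : x + (⨆ k, f k) = ⨆ k, x + f k := by
  simp only [add_comm x, ereal_iSup_add]

theorem mpMul_assoc (A B C : MPMat n) : mpMul (mpMul A B) C = mpMul A (mpMul B C) := by
  funext i j
  simp only [mpMul, ereal_iSup_add, ereal_add_iSup, add_assoc]
  exact iSup_comm

theorem mpId_mul (A : MPMat n) : mpMul mpId A = A := by
  funext i j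
  refine le_antisymm (iSup_le fun k => ?_) (le_iSup_of_le i (by simp [mpId]))
  by_cases h : i = k <;> simp [mpId, h]

theorem mpMul_id (A : MPMat n) : mpMul A mpId = A := by
  funext i j
  refine le_antisymm (iSup_le fun k => ?_) (le_iSup_of_le j (by simp [mpId]))
  by_cases h : k = j <;> simp [mpId, h]

theorem le_mpMul (A B : MPMat n) (i k j : Fin n) : A i k + B k j ≤ mpMul A B i j :=
  le_iSup (fun k => A i k + B k j) k

theorem mpMul_diag_le_of_swap {A B : MPMat n} {c : EReal} (h : ∀ j, mpMul B A j j ≤ c)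
    (i : Fin n) : mpMul A B i i ≤ c :=
  iSup_le fun k => add_comm (A i k) _ ▸ (le_mpMul B A k i k).trans (h k)

theorem mpPow_one (A : MPMat n) : mpPow A 1 = A := mpMul_id A

theorem mpPow_add (A : MPMat n) (a b : ℕ) :
    mpPow A (a + b) = mpMul (mpPow A a) (mpPow A b) := by
  induction a with
  | zero => rw [zero_add, mpPow, mpId_mul]
  | succ a ih => rw [Nat.succ_add, mpPow, ih, mpPow, mpMul_assoc]

end MaxPlus

section Walks

variable {n : ℕ}

theorem sum_walk_le_mpPow (A : MPMat n) (v : ℕ → Fin n) (k : ℕ) :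
    ∑ t ∈ Finset.range k, A (v t) (v (t + 1)) ≤ mpPow A k (v 0) (v k) := by
  induction k generalizing v with
  | zero => simp [mpPow, mpId]
  | succ k ih =>
    rw [Finset.sum_range_succ', add_comm]
    exact (add_le_add le_rfl (ih fun t => v (t + 1))).trans (le_mpMul A _ (v 0) (v 1) _)

theorem mpPow_eq_iSup_walk (A : MPMat n) (k : ℕ) (i j : Fin n) :
    mpPow A k i j = ⨆ (v : ℕ → Fin n) (_ : v 0 = i) (_ : v k = j),
      ∑ t ∈ Finset.range k, A (v t) (v (t + 1)) := by
  refine le_antisymm ?_ (iSup_le fun v => iSup₂_le fun h0 hk => h0 ▸ hk ▸ sum_walk_le_mpPow A v k)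
  induction k generalizing i with
  | zero =>
    by_cases hij : i = j
    · exact le_iSup_of_le (fun _ => i) (le_iSup₂_of_le rfl hij (by simp [mpPow, mpId, hij]))
    · simp [mpPow, mpId, hij]
  | succ k ih =>
    refine iSup_le fun m => (add_le_add le_rfl (ih m)).trans ?_
    simp only [ereal_add_iSup]
    refine iSup_le fun v => iSup₂_le fun h0 hk => ?_
    refine le_iSup_of_le (fun t => Nat.casesOn t i v) (le_iSup₂_of_le rfl hk ?_)
    rw [Finset.sum_range_succ', add_comm, ← h0]
    rfl

theorem inGamma_of_le_card (A : MPMat n) (h : ∀ k ≤ n, ∀ i, mpPow A k i i ≤ 0) : InGamma A := by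
  suffices ∀ k i, mpPow A k i i ≤ 0 from fun i k _ => this k i
  intro k
  induction k using Nat.strong_induction_on with
  | _ k ih =>
    intro i
    by_cases hkn : k ≤ n
    · exact h k hkn i
    rw [mpPow_eq_iSup_walk]
    refine iSup_le fun v => iSup₂_le fun h0 hk => ?_
    obtain ⟨a, b, hab, hbn, hvab⟩ : ∃ a b : ℕ, a < b ∧ b ≤ n ∧ v a = v b := by
      obtain ⟨x, y, hxy, hv⟩ := Fintype.exists_ne_map_eq_of_card_lt
        (fun t : Fin (n + 1) => v t) (by simp)
      rcases lt_or_gt_of_ne hxy with hlt | hlt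
      · exact ⟨x, y, hlt, by omega, hv⟩
      · exact ⟨y, x, hlt, by omega, hv.symm⟩
    obtain ⟨d, rfl⟩ := Nat.exists_eq_add_of_le hab.le
    obtain ⟨c, rfl⟩ := Nat.exists_eq_add_of_le (show a + d ≤ k by omega)
    have before := sum_walk_le_mpPow A v a
    have cycle := sum_walk_le_mpPow A (fun t => v (a + t)) d
    have after := sum_walk_le_mpPow A (fun t => v (a + d + t)) c
    simp only [add_zero, ← add_assoc, h0, hk, ← hvab] at before cycle after
    calc ∑ t ∈ Finset.range (a + d + c), A (v t) (v (t + 1))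
        ≤ mpPow A a i (v a) + mpPow A d (v a) (v a) + mpPow A c (v a) i := by
          rw [Finset.sum_range_add, Finset.sum_range_add]
          exact add_le_add (add_le_add before cycle) after
      _ ≤ mpPow A a i (v a) + 0 + mpPow A c (v a) i := by
          gcongr
          exact ih d (by omega) (v a)
      _ ≤ mpPow A (a + c) i i := by
          rw [add_zero, mpPow_add]
          exact le_mpMul _ _ i (v a) i
      _ ≤ 0 := ih (a + c) (by omega) i

theorem inGamma_iff_mpStar_diag_nonpos (A : MPMat n) : InGamma A ↔ ∀ i, mpStar A i i ≤ 0 := by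
  refine ⟨fun h i => iSup_le fun k => ?_, fun h i k _ => (le_iSup _ k).trans (h i)⟩
  rcases Nat.eq_zero_or_pos k with rfl | hk
  · simp [mpPow, mpId]
  · exact h i k hk

end Walks

section CircuitMean

theorem edivNat_le_coe_iff {x : EReal} {k : ℕ} (hk : 1 ≤ k) (r : ℝ) :
    edivNat x k ≤ (r : EReal) ↔ x ≤ ((k * r : ℝ) : EReal) := by
  have hk' : (0 : ℝ) < k := by exact_mod_cast hk
  induction x with
  | bot => simp [edivNat]
  | top => simp [edivNat, -EReal.coe_mul]
  | coe x => simp [edivNat, div_le_iff₀' hk', -EReal.coe_mul]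

theorem mcm_le_coe_iff {n : ℕ} (M : MPMat n) (r : ℝ) :
    mcm M ≤ (r : EReal) ↔ ∀ k, 1 ≤ k → k ≤ n → ∀ i, mpPow M k i i ≤ ((k * r : ℝ) : EReal) := by
  simp only [mcm, iSup_le_iff, Finset.mem_Icc, and_imp]
  exact forall₃_congr fun k hk _ => forall_congr' fun i => edivNat_le_coe_iff hk r

end CircuitMean

section Languages

variable {α : Type*} {n : ℕ} (f : α → MPMat n)

theorem wordMat_append (u v : List α) :
    wordMat f (u ++ v) = mpMul (wordMat f u) (wordMat f v) := by
  induction u with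
  | nil => rw [List.nil_append, wordMat, mpId_mul]
  | cons a u ih => rw [List.cons_append, wordMat, ih, wordMat, mpMul_assoc]

theorem wordMat_le_langMat {L : Language α} {w : List α} (hw : w ∈ L) (i j : Fin n) :
    wordMat f w i j ≤ langMat f L i j :=
  le_iSup₂ (f := fun s (_ : s ∈ L) => wordMat f s i j) w hw

theorem langMat_mono {L M : Language α} (h : L ≤ M) (i j : Fin n) :
    langMat f L i j ≤ langMat f M i j :=
  iSup₂_le fun _ hw => wordMat_le_langMat f (h hw) i j

theorem langMat_singleton (w : List α) : langMat f {w} = wordMat f w := by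
  funext i j
  exact iSup_singleton

theorem langMat_mul (L M : Language α) :
    langMat f (L * M) = mpMul (langMat f L) (langMat f M) := by
  funext i j
  apply le_antisymm
  · refine iSup₂_le fun s hs => ?_
    obtain ⟨a, ha, b, hb, rfl⟩ := Language.mem_mul.1 hs
    rw [wordMat_append]
    exact iSup_mono fun k =>
      add_le_add (wordMat_le_langMat f ha i k) (wordMat_le_langMat f hb k j)
  · refine iSup_le fun k => ?_
    simp only [langMat, ereal_iSup_add, ereal_add_iSup]
    refine iSup₂_le fun b hb => iSup₂_le fun a ha => ?_
    calc wordMat f a i k + wordMat f b k j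
        ≤ wordMat f (a ++ b) i j := wordMat_append f a b ▸ le_mpMul _ _ i k j
      _ ≤ langMat f (L * M) i j := wordMat_le_langMat f (Language.append_mem_mul ha hb) i j

theorem langMat_pow (L : Language α) (k : ℕ) : langMat f (L ^ k) = mpPow (langMat f L) k := by
  induction k with
  | zero => exact langMat_singleton f []
  | succ k ih => rw [pow_succ', langMat_mul, ih, mpPow]

theorem langMat_kstar (L : Language α) : langMat f L∗ = mpStar (langMat f L) := by
  funext i j
  simp only [mpStar, ← langMat_pow]
  refine le_antisymm (iSup₂_le fun w hw => ?_) (iSup_le fun k => langMat_mono f pow_le_kstar i j)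
  rw [Language.kstar_eq_iSup_pow] at hw
  obtain ⟨k, hk⟩ := Language.mem_iSup.1 hw
  exact le_iSup_of_le k (wordMat_le_langMat f hk i j)

theorem mpPow_iSup (k : ℕ) (i j : Fin n) :
    mpPow (fun i j => ⨆ z, f z i j) k i j = ⨆ (w : List α) (_ : w.length = k), wordMat f w i j := by
  induction k generalizing i with
  | zero => simp [mpPow, wordMat]
  | succ k ih =>
    simp only [mpPow, mpMul, ih, ereal_iSup_add, ereal_add_iSup]
    apply le_antisymm
    · refine iSup_le fun m => iSup_le fun w => iSup₂_le fun hw z => ?_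
      exact le_iSup₂_of_le (z :: w) (by simp [hw]) (le_mpMul _ _ i m j)
    · refine iSup₂_le fun w hw => ?_
      obtain ⟨z, w, rfl⟩ := List.exists_cons_of_length_eq_add_one hw
      exact iSup_mono fun m => le_iSup_of_le w <|
        le_iSup₂_of_le (by simpa using hw) z le_rfl

/-- If `z = μ(K M^*) i i` is finite, then `z + μ(M^*) i i ≤ z` because `M^* M^* = M^*`. -/
theorem langMat_kstar_diag_nonpos (K M : Language α) (i : Fin n)
    (hbot : langMat f (K * M∗) i i ≠ ⊥) (htop : langMat f (K * M∗) i i ≠ ⊤) :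
    langMat f M∗ i i ≤ 0 := by
  have absorb : langMat f (K * M∗) i i + langMat f M∗ i i ≤ langMat f (K * M∗) i i := by
    conv_rhs => rw [← kstar_mul_kstar, ← mul_assoc, langMat_mul]
    exact le_mpMul _ _ i i i
  rw [add_comm, ← EReal.le_sub_iff_add_le (.inl hbot) (.inl htop)] at absorb
  rwa [EReal.sub_self htop hbot] at absorb

theorem langMat_kstar_mul_pow_diag_le (K M : Language α) {r : ℝ}
    (hr : mcm (langMat f (K * M∗)) ≤ r) {k : ℕ} (hk : 1 ≤ k) (hkn : k ≤ n) (i : Fin n) :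
    langMat f (M∗ * (K * M∗) ^ k) i i ≤ ((k * r : ℝ) : EReal) := by
  rw [langMat_mul]
  refine mpMul_diag_le_of_swap (fun j => ?_) i
  have absorb : (K * M∗) ^ k * M∗ = (K * M∗) ^ k := by
    obtain ⟨k, rfl⟩ := Nat.exists_eq_add_of_le' hk
    rw [pow_succ, mul_assoc, mul_assoc, kstar_mul_kstar]
  rw [← langMat_mul, absorb, langMat_pow]
  exact (mcm_le_coe_iff _ r).1 hr k hk hkn j

end Languages

section Levels

variable {α M : Type*}

/-- The height of a word: the sum of the weights `σ` of its letters. -/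
def height [AddMonoid M] (σ : α → M) (w : List α) : M := (w.map σ).sum

theorem height_nil [AddMonoid M] (σ : α → M) : height σ [] = 0 := rfl

theorem height_cons [AddMonoid M] (σ : α → M) (z : α) (w : List α) :
    height σ (z :: w) = σ z + height σ w := by
  rw [height, List.map_cons, List.sum_cons, height]

theorem height_append [AddMonoid M] (σ : α → M) (u v : List α) :
    height σ (u ++ v) = height σ u + height σ v := by
  rw [height, List.map_append, List.sum_append, height, height]

/-- The language of all words of height `c`. Inclusions `L ≤ level σ c` say that `L` is homogeneous
for the grading of words by height. -/
def level [AddMonoid M] (σ : α → M) (c : M) : Language α := {w | height σ w = c}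

theorem le_level_iff [AddMonoid M] {σ : α → M} {c : M} {L : Language α} :
    L ≤ level σ c ↔ ∀ w ∈ L, height σ w = c := Iff.rfl

theorem singleton_le_level [AddMonoid M] (σ : α → M) (z : α) :
    ({[z]} : Language α) ≤ level σ (σ z) := by
  refine le_level_iff.2 fun w hw => ?_
  obtain rfl : w = [z] := hw
  rw [height_cons, height_nil, add_zero]

theorem one_le_level_zero [AddMonoid M] (σ : α → M) : 1 ≤ level σ 0 :=
  le_level_iff.2 fun w hw => by rw [(Language.mem_one w).1 hw, height_nil]

theorem mul_le_level_add [AddMonoid M] {σ : α → M} {c d : M} {K L : Language α}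
    (hK : K ≤ level σ c) (hL : L ≤ level σ d) : K * L ≤ level σ (c + d) := by
  rw [le_level_iff] at *
  intro w hw
  obtain ⟨u, hu, v, hv, rfl⟩ := Language.mem_mul.1 hw
  rw [← hK u hu, ← hL v hv, height_append]

theorem pow_le_level_nsmul [AddMonoid M] {σ : α → M} {c : M} {L : Language α}
    (hL : L ≤ level σ c) (k : ℕ) : L ^ k ≤ level σ (k • c) := by
  induction k with
  | zero => simpa using one_le_level_zero σ
  | succ k ih =>
    rw [pow_succ, succ_nsmul]
    exact mul_le_level_add ih hL

theorem kstar_le_level_zero [AddMonoid M] {σ : α → M} {L : Language α} (hL : L ≤ level σ 0) :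
    L∗ ≤ level σ 0 := by
  refine kstar_le_of_mul_le_left (one_le_level_zero σ) ?_
  simpa using mul_le_level_add (le_refl (level σ 0)) hL

theorem SL_le_level_zero [AddGroup M] {σ : α → M} {c : M} {K L : Language α}
    (hK : K ≤ level σ c) (hL : L ≤ level σ (-c)) (m : ℕ) : SL K L m ≤ level σ 0 := by
  induction m with
  | zero => exact one_le_level_zero σ
  | succ m ih =>
    refine add_le (add_le ?_ ?_) (one_le_level_zero σ)
    · simpa using mul_le_level_add (mul_le_level_add (mul_le_level_add hK ih) ih) hL
    · simpa using mul_le_level_add (mul_le_level_add (mul_le_level_add hL ih) ih) hK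

end Levels

section WeightedLetters

variable {α : Type*} {n : ℕ} {f : α → MPMat n} {σ : α → ℝ}

theorem wordMat_sm (f : α → MPMat n) (σ : α → ℝ) (w : List α) (i j : Fin n) :
    wordMat (fun z => sm (σ z) (f z)) w i j = ((height σ w : ℝ) : EReal) + wordMat f w i j := by
  induction w generalizing i with
  | nil => simp [wordMat, height_nil]
  | cons z w ih =>
    simp only [wordMat, mpMul, ih, sm, ereal_add_iSup, height_cons, EReal.coe_add, add_add_add_comm]

theorem coe_add_nonpos_iff (r : ℝ) (x : EReal) :
    (r : EReal) + x ≤ 0 ↔ x ≤ ((-r : ℝ) : EReal) := by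
  rw [add_comm, ← EReal.le_sub_iff_add_le (by simp) (by simp), zero_sub, EReal.coe_neg]

theorem inGamma_iSup_sm_of_langMat_le
    (h : ∀ w : List α, w.length ≤ n → ∃ (K : Language α) (c : ℝ), w ∈ K ∧ K ≤ level σ c ∧
      ∀ i, langMat f K i i ≤ ((-c : ℝ) : EReal)) :
    InGamma fun i j => ⨆ z, sm (σ z) (f z) i j := by
  refine inGamma_of_le_card _ fun k hk i => ?_
  rw [mpPow_iSup (fun z => sm (σ z) (f z))]
  refine iSup₂_le fun w hw => ?_
  obtain ⟨K, c, hwK, hKc, hK⟩ := h w (hw.trans_le hk)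
  rw [wordMat_sm, le_level_iff.1 hKc w hwK, coe_add_nonpos_iff]
  exact (wordMat_le_langMat f hwK i i).trans (hK i)

theorem InGamma.langMat_le (h : InGamma fun i j => ⨆ z, sm (σ z) (f z) i j) {K : Language α}
    {c : ℝ} (hK : K ≤ level σ c) (i : Fin n) : langMat f K i i ≤ ((-c : ℝ) : EReal) := by
  refine iSup₂_le fun w hw => ?_
  rw [← le_level_iff.1 hK w hw, ← coe_add_nonpos_iff, ← wordMat_sm]
  rw [inGamma_iff_mpStar_diag_nonpos] at h
  refine le_trans ?_ (h i)
  refine le_iSup_of_le w.length ?_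
  rw [mpPow_iSup (fun z => sm (σ z) (f z))]
  exact le_iSup₂_of_le w rfl le_rfl

theorem InGamma.mcm_langMat_le (h : InGamma fun i j => ⨆ z, sm (σ z) (f z) i j)
    {K : Language α} {c : ℝ} (hK : K ≤ level σ c) : mcm (langMat f K) ≤ ((-c : ℝ) : EReal) := by
  refine (mcm_le_coe_iff _ _).2 fun k _ _ i => ?_
  rw [← langMat_pow]
  simpa [-EReal.coe_mul] using h.langMat_le (pow_le_level_nsmul hK k) i

end WeightedLetters

section SignLists

/-- The final height of the ±1 path whose steps are `l`. -/
def signSum (l : List ℤˣ) : ℤ := height Units.val l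

@[simp] theorem signSum_nil : signSum [] = 0 := rfl

@[simp] theorem signSum_cons (e : ℤˣ) (l : List ℤˣ) : signSum (e :: l) = e + signSum l :=
  height_cons _ e l

@[simp] theorem signSum_append (l m : List ℤˣ) : signSum (l ++ m) = signSum l + signSum m :=
  height_append _ l m

theorem natAbs_signSum_le_length (l : List ℤˣ) : (signSum l).natAbs ≤ l.length := by
  induction l with
  | nil => simp
  | cons e l ih =>
    calc (signSum (e :: l)).natAbs ≤ (e : ℤ).natAbs + (signSum l).natAbs :=
          signSum_cons e l ▸ Int.natAbs_add_le e (signSum l)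
      _ ≤ (e :: l).length := by rw [Int.units_natAbs, List.length_cons, add_comm]; gcongr

theorem exists_balanced_prefix (e : ℤˣ) (l : List ℤˣ) (h : e * signSum l < 0) :
    ∃ d l', l = d ++ -e :: l' ∧ signSum d = 0 := by
  induction l using List.reverseRecOn with
  | nil => simp at h
  | append_singleton l z ih =>
    by_cases hl : e * signSum l < 0
    · obtain ⟨d, l', rfl, hd⟩ := ih hl
      exact ⟨d, l' ++ [z], by simp, hd⟩
    · rw [signSum_append, signSum_cons, signSum_nil, add_zero, mul_add] at h
      obtain rfl : z = -e := by
        by_contra hz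
        rw [Int.units_ne_iff_eq_neg.1 hz, neg_neg, Int.units_coe_mul_self] at h
        omega
      rw [Units.val_neg, mul_neg, Int.units_coe_mul_self] at h
      have hzero : e * signSum l = 0 := by omega
      exact ⟨l, [], rfl, (mul_eq_zero.1 hzero).resolve_left e.ne_zero⟩

/-- A path falling by at least two must make two consecutive steps down starting at height `0`:
otherwise every first step below `0` is immediately undone. -/
theorem exists_balanced_prefix_double_step (e : ℤˣ) (l : List ℤˣ) (h : e * signSum l < -1) :
    ∃ d l', l = d ++ -e :: -e :: l' ∧ signSum d = 0 := by
  obtain ⟨d, r, hl, hd⟩ := exists_balanced_prefix e l (by omega)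
  match r with
  | [] => simp [hl, hd, Int.units_coe_mul_self] at h
  | x :: r =>
    by_cases hx : x = -e
    · exact ⟨d, r, by rw [hl, hx], hd⟩
    obtain rfl : x = e := by rw [Int.units_ne_iff_eq_neg.1 hx, neg_neg]
    have shorter : r.length < l.length := by
      rw [hl, List.length_append, List.length_cons, List.length_cons]
      omega
    obtain ⟨d', l', rfl, hd'⟩ :=
      exists_balanced_prefix_double_step x r (by simpa [hl, hd] using h)
    exact ⟨d ++ -x :: x :: d', l', by simp [hl], by simp [hd, hd']⟩
termination_by l.length

variable {α : Type*} (L : ℤˣ → Language α)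

theorem one_le_SL (K L : Language α) (m : ℕ) : 1 ≤ SL K L m := by
  cases m with
  | zero => exact le_rfl
  | succ m => exact le_sup_right

theorem prod_map_enclosed_le_SL_succ (e : ℤˣ) {m : ℕ} {t : List ℤˣ}
    (ht : (t.map L).prod ≤ SL (L 1) (L (-1)) m * SL (L 1) (L (-1)) m) :
    ((e :: (t ++ [-e])).map L).prod ≤ SL (L 1) (L (-1)) (m + 1) := by
  have enclose : ((e :: (t ++ [-e])).map L).prod ≤
      L e * (SL (L 1) (L (-1)) m * SL (L 1) (L (-1)) m) * L (-e) := by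
    simpa [mul_assoc] using mul_le_mul_left (mul_le_mul_right ht (L e)) (L (-e))
  refine enclose.trans ?_
  rcases Int.units_eq_one_or e with rfl | rfl <;> simp only [SL, mul_assoc, neg_neg]
  · exact le_sup_of_le_left le_sup_left
  · exact le_sup_of_le_left le_sup_right

/-- A balanced path either ends by undoing its first step, or has in between a double step at which
it splits into two paths of that kind. -/
theorem prod_map_le_SL_sq (m : ℕ) (l : List ℤˣ) (h0 : signSum l = 0) (hl : l.length ≤ 2 * m + 1) :
    (l.map L).prod ≤ SL (L 1) (L (-1)) m * SL (L 1) (L (-1)) m := by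
  induction m generalizing l with
  | zero =>
    match l with
    | [] => exact one_le_mul (one_le_SL _ _ 0) (one_le_SL _ _ 0)
    | [a] => simp at h0
    | _ :: _ :: _ => simp at hl
  | succ m ih =>
    have enclosed (e : ℤˣ) (t : List ℤˣ) (ht0 : signSum t = 0) (ht : t.length ≤ 2 * m + 1) :
        ((e :: (t ++ [-e])).map L).prod ≤ SL (L 1) (L (-1)) (m + 1) :=
      prod_map_enclosed_le_SL_succ L e (ih t ht0 ht)
    match l with
    | [] => exact one_le_mul (one_le_SL _ _ _) (one_le_SL _ _ _)
    | a :: t =>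
      rcases List.eq_nil_or_concat' t with rfl | ⟨t, b, rfl⟩
      · simp at h0
      simp only [List.length_cons, List.length_append, List.length_nil] at hl
      by_cases hab : b = -a
      · subst hab
        exact (enclosed a t (by simpa using h0) (by omega)).trans
          (le_mul_of_one_le_right' (one_le_SL _ _ _))
      obtain rfl : b = a := by rw [Int.units_ne_iff_eq_neg.1 hab, neg_neg]
      rw [signSum_cons, signSum_append, signSum_cons, signSum_nil] at h0
      have hfall : b * signSum t = -2 := by
        linear_combination (b : ℤ) * h0 - 2 * Int.units_coe_mul_self b
      obtain ⟨d, l', rfl, hd⟩ := exists_balanced_prefix_double_step b t (by omega)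
      have hl' : signSum l' = 0 := by
        rw [signSum_append, signSum_cons, signSum_cons, hd, Units.val_neg] at h0
        linear_combination h0
      have hsplit : b :: (d ++ -b :: -b :: l' ++ [b]) =
          (b :: (d ++ [-b])) ++ (-b :: (l' ++ [- -b])) := by simp
      simp only [List.length_append, List.length_cons] at hl
      rw [hsplit, List.map_append, List.prod_append]
      exact mul_le_mul' (enclosed b d hd (by omega)) (enclosed (-b) l' hl' (by omega))

/-- Cutting at the successive first visits to `-e, -2e, …` leaves balanced pieces. -/
theorem prod_map_le_kstar_mul_pow (e : ℤˣ) (n k : ℕ) (l : List ℤˣ) (hk : e * signSum l = -k)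
    (hn : l.length ≤ n) :
    (l.map L).prod ≤
      (SL (L 1) (L (-1)) (n / 2))∗ * (L (-e) * (SL (L 1) (L (-1)) (n / 2))∗) ^ k := by
  have balanced (d : List ℤˣ) (hd : signSum d = 0) (hdn : d.length ≤ n) :
      (d.map L).prod ≤ (SL (L 1) (L (-1)) (n / 2))∗ :=
    calc (d.map L).prod ≤ SL (L 1) (L (-1)) (n / 2) * SL (L 1) (L (-1)) (n / 2) :=
          prod_map_le_SL_sq L (n / 2) d hd (by omega)
      _ ≤ (SL (L 1) (L (-1)) (n / 2))∗ := pow_two (SL (L 1) (L (-1)) (n / 2)) ▸ pow_le_kstar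
  induction k generalizing l with
  | zero => simpa using balanced l (by simpa using hk) hn
  | succ k ih =>
    obtain ⟨d, l', rfl, hd⟩ := exists_balanced_prefix e l (by omega)
    simp only [List.length_append, List.length_cons] at hn
    have hl' : e * signSum l' = -k := by
      rw [signSum_append, signSum_cons, hd, Units.val_neg, Nat.cast_succ] at hk
      linear_combination hk + Int.units_coe_mul_self e
    rw [List.map_append, List.prod_append, List.map_cons, List.prod_cons, pow_succ', mul_assoc]
    gcongr
    · exact balanced d hd (by omega)
    · exact ih l' hl' (by omega)

theorem exists_prod_map_le_kstar_mul_pow (n : ℕ) (l : List ℤˣ) (hn : l.length ≤ n) :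
    ∃ (e : ℤˣ) (k : ℕ), k ≤ n ∧ (l.map L).prod ≤
      (SL (L 1) (L (-1)) (n / 2))∗ * (L e * (SL (L 1) (L (-1)) (n / 2))∗) ^ k := by
  obtain ⟨e, he⟩ : ∃ e : ℤˣ, e * signSum l = -((signSum l).natAbs : ℤ) := by
    rcases le_total (signSum l) 0 with h | h
    · exact ⟨1, by simp [abs_of_nonpos h]⟩
    · exact ⟨-1, by simp [abs_of_nonneg h]⟩
  exact ⟨-e, _, (natAbs_signSum_le_length l).trans hn, prod_map_le_kstar_mul_pow L e n _ l he hn⟩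

end SignLists

section PIC

/-- The letter that changes the height in the direction `e`: `p` raises it and `i` lowers it. -/
def signLetter (e : ℤˣ) : Fin 3 := if e = 1 then 0 else 1

/-- The languages `𝒫` (for `e = 1`) and `ℐ` (for `e = -1`), indexed by the sign of their letter. -/
def signLang (e : ℤˣ) : Language (Fin 3) :=
  ({[2]} : Language (Fin 3))∗ * {[signLetter e]} * ({[2]} : Language (Fin 3))∗

theorem signLang_one : signLang 1 = langP := rfl

theorem signLang_neg_one : signLang (-1) = langI := rfl

theorem singleton_mul_kstar_le_signLang (e : ℤˣ) :
    {[signLetter e]} * ({[2]} : Language (Fin 3))∗ ≤ signLang e :=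
  mul_le_mul_left (le_mul_of_one_le_left' one_le_kstar) _

theorem mem_kstar_or_mem_prod_signLang (w : List (Fin 3)) :
    w ∈ ({[2]} : Language (Fin 3))∗ ∨
      ∃ l : List ℤˣ, l.length ≤ w.length ∧ w ∈ (l.map signLang).prod := by
  suffices ∃ l : List ℤˣ, l.length ≤ w.length ∧
      w ∈ ({[2]} : Language (Fin 3))∗ * (l.map signLang).prod by
    obtain ⟨l, hl, hw⟩ := this
    match l with
    | [] => exact .inl (by simpa using hw)
    | e :: l =>
      refine .inr ⟨e :: l, hl, ?_⟩
      rwa [List.map_cons, List.prod_cons, signLang, ← mul_assoc, ← mul_assoc, ← mul_assoc,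
        kstar_mul_kstar, ← signLang, ← List.prod_cons, ← List.map_cons] at hw
  induction w with
  | nil => exact ⟨[], le_rfl, by simpa using Language.nil_mem_kstar _⟩
  | cons z w ih =>
    obtain ⟨l, hl, hw⟩ := ih
    have hzw : z :: w ∈ ({[z]} : Language (Fin 3)) *
        (({[2]} : Language (Fin 3))∗ * (l.map signLang).prod) :=
      Language.append_mem_mul (a := [z]) rfl hw
    rw [← mul_assoc] at hzw
    obtain rfl | ⟨e, rfl⟩ : z = 2 ∨ ∃ e, z = signLetter e := by
      fin_cases z
      exacts [.inr ⟨1, rfl⟩, .inr ⟨-1, rfl⟩, .inl rfl]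
    · have absorb : {[2]} * ({[2]} : Language (Fin 3))∗ * (l.map signLang).prod ≤
          ({[2]} : Language (Fin 3))∗ * (l.map signLang).prod :=
        mul_le_mul_left mul_kstar_le_kstar _
      exact ⟨l, hl.trans (Nat.le_succ _), absorb hzw⟩
    · have absorb : {[signLetter e]} * ({[2]} : Language (Fin 3))∗ * (l.map signLang).prod ≤
          ({[2]} : Language (Fin 3))∗ * ((e :: l).map signLang).prod :=
        (mul_le_mul_left (singleton_mul_kstar_le_signLang e) _).trans
          (le_mul_of_one_le_left' one_le_kstar)
      exact ⟨e :: l, Nat.succ_le_succ hl, absorb hzw⟩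

/-- The weights `λ`, `-λ`, `0` of the letters `p`, `i`, `c`: shifting the matrix of each letter by
its weight turns `P ⊕ I ⊕ C` into `λP ⊕ λ⁻¹I ⊕ C`. -/
def picWeight (lam : ℝ) : Fin 3 → ℝ := ![lam, -lam, 0]

variable {n : ℕ} {P I C : MPMat n} {lam : ℝ}

theorem picMat_eq_iSup_sm (P I C : MPMat n) (lam : ℝ) :
    picMat P I C lam = fun i j => ⨆ z, sm (picWeight lam z) (mu3 P I C z) i j := by
  funext i j
  refine eq_of_forall_ge_iff fun c => ?_
  simp [picMat, picWeight, mu3, sm, and_assoc]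

theorem kstar_c_le_level (lam : ℝ) :
    ({[2]} : Language (Fin 3))∗ ≤ level (picWeight lam) 0 :=
  kstar_le_level_zero (singleton_le_level (picWeight lam) 2)

theorem signLang_le_level (lam : ℝ) (e : ℤˣ) :
    signLang e ≤ level (picWeight lam) ((e : ℤ) * lam) := by
  have hletter : picWeight lam (signLetter e) = (e : ℤ) * lam := by
    rcases Int.units_eq_one_or e with rfl | rfl <;> simp [picWeight, signLetter]
  simpa [hletter, signLang] using mul_le_level_add (mul_le_level_add (kstar_c_le_level lam)
    (singleton_le_level (picWeight lam) (signLetter e))) (kstar_c_le_level lam)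

theorem kstar_SL_signLang_le_level (lam : ℝ) (m : ℕ) :
    (SL (signLang 1) (signLang (-1)) m)∗ ≤ level (picWeight lam) 0 :=
  kstar_le_level_zero <| SL_le_level_zero (signLang_le_level lam 1)
    (by simpa using signLang_le_level lam (-1)) m

theorem signLang_mul_kstar_le_level (lam : ℝ) (e : ℤˣ) (m : ℕ) :
    signLang e * (SL (signLang 1) (signLang (-1)) m)∗ ≤ level (picWeight lam) ((e : ℤ) * lam) := by
  simpa using mul_le_level_add (signLang_le_level lam e) (kstar_SL_signLang_le_level lam m)

theorem inGamma_iff_langMat_kstar_c (P I C : MPMat n) :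
    InGamma C ↔ ∀ i, langMat (mu3 P I C) {[2]}∗ i i ≤ 0 := by
  have hC : langMat (mu3 P I C) {[2]} = C := (langMat_singleton _ _).trans (mpMul_id C)
  rw [inGamma_iff_mpStar_diag_nonpos, langMat_kstar, hC]

theorem langMat_kstar_diag_nonpos_of_mcm_le (hd : ∀ j, P j j ≠ ⊥ ∨ I j j ≠ ⊥)
    (L : Language (Fin 3))
    (h : ∀ e : ℤˣ, mcm (langMat (mu3 P I C) (signLang e * L∗)) ≤ ((-((e : ℤ) * lam) : ℝ) : EReal))
    (i : Fin n) : langMat (mu3 P I C) L∗ i i ≤ 0 := by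
  obtain ⟨e, he⟩ : ∃ e, mu3 P I C (signLetter e) i i ≠ ⊥ := by
    rcases hd i with hi | hi
    exacts [⟨1, by simpa [mu3, signLetter] using hi⟩, ⟨-1, by simpa [mu3, signLetter] using hi⟩]
  have hletter : {[signLetter e]} ≤ signLang e * L∗ :=
    calc {[signLetter e]} ≤ {[signLetter e]} * ({[2]} : Language (Fin 3))∗ :=
          le_mul_of_one_le_right' one_le_kstar
      _ ≤ signLang e := singleton_mul_kstar_le_signLang e
      _ ≤ signLang e * L∗ := le_mul_of_one_le_right' one_le_kstar
  have hlow : mu3 P I C (signLetter e) i i ≤ langMat (mu3 P I C) (signLang e * L∗) i i := by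
    simpa only [langMat_singleton, wordMat, mpMul_id] using langMat_mono (mu3 P I C) hletter i i
  have hup := (mcm_le_coe_iff _ _).1 (h e) 1 le_rfl i.pos i
  rw [mpPow_one] at hup
  exact langMat_kstar_diag_nonpos _ _ _ i (ne_bot_of_le_ne_bot he hlow)
    (ne_top_of_le_ne_top (EReal.coe_ne_top _) hup)

theorem inGamma_picMat_iff_forall_sign (P I C : MPMat n) (hd : ∀ j, P j j ≠ ⊥ ∨ I j j ≠ ⊥)
    (lam : ℝ) :
    InGamma (picMat P I C lam) ↔ InGamma C ∧ ∀ e : ℤˣ,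
      mcm (langMat (mu3 P I C) (signLang e * (SL (signLang 1) (signLang (-1)) (n / 2))∗)) ≤
        ((-((e : ℤ) * lam) : ℝ) : EReal) := by
  rw [picMat_eq_iSup_sm, inGamma_iff_langMat_kstar_c P I C]
  constructor
  · intro h
    exact ⟨fun i => by simpa using h.langMat_le (kstar_c_le_level lam) i,
      fun e => h.mcm_langMat_le (signLang_mul_kstar_le_level lam e _)⟩
  rintro ⟨hC, hS⟩
  refine inGamma_iSup_sm_of_langMat_le fun w hwn => ?_
  rcases mem_kstar_or_mem_prod_signLang w with hw | ⟨l, hl, hw⟩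
  · exact ⟨_, 0, hw, kstar_c_le_level lam, by simpa using hC⟩
  obtain ⟨e, k, hk, hle⟩ := exists_prod_map_le_kstar_mul_pow signLang n l (hl.trans hwn)
  refine ⟨_, _, hle hw, mul_le_level_add (kstar_SL_signLang_le_level lam _)
    (pow_le_level_nsmul (signLang_mul_kstar_le_level lam e _) k), fun i => ?_⟩
  rcases Nat.eq_zero_or_pos k with rfl | hk0
  · simpa using langMat_kstar_diag_nonpos_of_mcm_le hd _ hS i
  · simpa [-EReal.coe_mul] using langMat_kstar_mul_pow_diag_le _ _ _ (hS e) hk0 hk i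

end PIC

theorem stmt18_general {n : ℕ} (P I C : MPMat n) (hd : ∀ j, P j j ≠ ⊥ ∨ I j j ≠ ⊥) (lam : ℝ) :
    InGamma (picMat P I C lam) ↔
      (InGamma C ∧
       mcm (langMat (mu3 P I C) (langI * KStar.kstar (SL langP langI (n / 2)))) ≤ (lam : EReal) ∧
       (lam : EReal) ≤
        -mcm (langMat (mu3 P I C) (langP * KStar.kstar (SL langP langI (n / 2))))) := by
  rw [inGamma_picMat_iff_forall_sign P I C hd lam, ← signLang_one, ← signLang_neg_one,
    EReal.le_neg]
  refine and_congr_right fun _ => ⟨fun h => ⟨by simpa using h (-1), by simpa using h 1⟩, ?_⟩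
  rintro ⟨hI, hP⟩ e
  rcases Int.units_eq_one_or e with rfl | rfl
  exacts [by simpa using hP, by simpa using hI]

/-- with `𝒫 = {c}^*·{p}·{c}^*`, `ℐ = {c}^*·{i}·{c}^*` and
`S = S(𝒫, ℐ, ⌊n/2⌋)`, for real `λ`: `G(λP ⊕ λ⁻¹I ⊕ C) ∈ Γ` iff `G(C) ∈ Γ` and
`mcm(μ(ℐ·S^*)) ≤ λ ≤ -mcm(μ(𝒫·S^*))`. -/
theorem stmt18 {n : ℕ} (P I C : MPMat n)
    (hP : ∀ i j, P i j ≠ ⊤) (hI : ∀ i j, I i j ≠ ⊤) (hC : ∀ i j, C i j ≠ ⊤)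
    (hPd : ∀ j, P j j ≠ ⊥) (lam : ℝ) :
    InGamma (picMat P I C lam) ↔
      (InGamma C ∧
       mcm (langMat (mu3 P I C) (langI * KStar.kstar (SL langP langI (n / 2)))) ≤ (lam : EReal) ∧
       (lam : EReal) ≤ -mcm (langMat (mu3 P I C) (langP * KStar.kstar (SL langP langI (n / 2))))) :=
  stmt18_general P I C (fun j => .inl (hPd j)) lam

end NCP
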